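/- Let p, q ∈ [0,1] and let ρ be any 4×4 complex matrix with trace 1. Conditioning the quantum-switch output on the control-qubit outcome |+⟩ gives (I₄ ⊗ ⟨+|) · S(ρ) · (I₄ ⊗ |+⟩) = (1−p)(1−q)·ρ + p(1−q)·(I₂⊗X) ρ (I₂⊗X)† + (1−p)q·(I₂⊗Z) ρ (I₂⊗Z)†, a matrix of trace 1−pq; consequently, if pq < 1, the normalized conditional state is [ (1−p)(1−q)·ρ + p(1−q)·(I₂⊗X) ρ (I₂⊗X)† + (1−p)q·(I₂⊗Z) ρ (I₂⊗Z)† ] / (1−pq). -/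

import Mathlib

open Matrix Kronecker Complex

noncomputable section

def PX : Matrix (Fin 2) (Fin 2) ℂ := !![0, 1; 1, 0]
def PZ : Matrix (Fin 2) (Fin 2) ℂ := !![1, 0; 0, -1]
def I2 : Matrix (Fin 2) (Fin 2) ℂ := 1

def ket0 : Fin 2 → ℂ := ![1, 0]
def ket1 : Fin 2 → ℂ := ![0, 1]
def ketPlus : Fin 2 → ℂ := ((Real.sqrt 2 : ℂ))⁻¹ • (ket0 + ket1)
def ketMinus : Fin 2 → ℂ := ((Real.sqrt 2 : ℂ))⁻¹ • (ket0 - ket1)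

def proj (v : Fin 2 → ℂ) : Matrix (Fin 2) (Fin 2) ℂ := vecMulVec v (star v)

/-- Kronecker product, flattened to `Fin (m*n)` indices (row-major). -/
def kron {m n : ℕ} (A : Matrix (Fin m) (Fin m) ℂ) (B : Matrix (Fin n) (Fin n) ℂ) :
    Matrix (Fin (m * n)) (Fin (m * n)) ℂ :=
  Matrix.reindex finProdFinEquiv finProdFinEquiv (A ⊗ₖ B)

/-- Bit-flip channel Kraus operators: D₁ = √(1-p)·I₂, D₂ = √p·X. -/
def Dk (p : ℝ) : Fin 2 → Matrix (Fin 2) (Fin 2) ℂ :=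
  ![(Real.sqrt (1 - p) : ℂ) • I2, (Real.sqrt p : ℂ) • PX]

/-- Phase-flip channel Kraus operators: E₁ = √(1-q)·I₂, E₂ = √q·Z. -/
def Ek (q : ℝ) : Fin 2 → Matrix (Fin 2) (Fin 2) ℂ :=
  ![(Real.sqrt (1 - q) : ℂ) • I2, (Real.sqrt q : ℂ) • PZ]

/-- Quantum-switch Kraus operators W_{ij} = I₂ ⊗ (DᵢEⱼ ⊗ |0⟩⟨0| + EⱼDᵢ ⊗ |1⟩⟨1|). -/
def W (p q : ℝ) (i j : Fin 2) : Matrix (Fin 8) (Fin 8) ℂ :=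
  kron I2 (kron (Dk p i * Ek q j) (proj ket0) + kron (Ek q j * Dk p i) (proj ket1))

/-- Quantum-switch output S(ρ) = Σᵢⱼ W_{ij} (ρ ⊗ |+⟩⟨+|) W_{ij}†. -/
def Sout (p q : ℝ) (ρ : Matrix (Fin 4) (Fin 4) ℂ) : Matrix (Fin 8) (Fin 8) ℂ :=
  ∑ i : Fin 2, ∑ j : Fin 2, W p q i j * kron ρ (proj ketPlus) * (W p q i j)ᴴ

/-- Contraction of the control-qubit factor of an 8×8 matrix with a vector v:
(I₄ ⊗ ⟨v|) M (I₄ ⊗ |v⟩). -/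
def contractCtrl (M : Matrix (Fin 8) (Fin 8) ℂ) (v : Fin 2 → ℂ) :
    Matrix (Fin 4) (Fin 4) ℂ :=
  Matrix.of fun a b => ∑ i : Fin 2, ∑ j : Fin 2,
    star (v i) * M (finProdFinEquiv (a, i)) (finProdFinEquiv (b, j)) * v j

theorem kron_mul {m n : ℕ} (A C : Matrix (Fin m) (Fin m) ℂ) (B D : Matrix (Fin n) (Fin n) ℂ) :
    kron A B * kron C D = kron (A * C) (B * D) := by
  simp [kron, Matrix.mul_kronecker_mul]

theorem kron_conjTranspose {m n : ℕ} (A : Matrix (Fin m) (Fin m) ℂ)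
    (B : Matrix (Fin n) (Fin n) ℂ) : (kron A B)ᴴ = kron Aᴴ Bᴴ := by
  simp [kron, Matrix.conjTranspose_kronecker]

theorem kron_add_right {m n : ℕ} (A : Matrix (Fin m) (Fin m) ℂ)
    (B C : Matrix (Fin n) (Fin n) ℂ) : kron A (B + C) = kron A B + kron A C := by
  ext i j
  simp [kron, Matrix.kronecker_add]

theorem kron_smul_right {m n : ℕ} (c : ℂ) (A : Matrix (Fin m) (Fin m) ℂ)
    (B : Matrix (Fin n) (Fin n) ℂ) : kron A (c • B) = c • kron A B := by
  ext i j
  simp [kron, Matrix.kronecker_smul]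

theorem kron_assoc_two (A B C : Matrix (Fin 2) (Fin 2) ℂ) :
    (kron A (kron B C) : Matrix (Fin 8) (Fin 8) ℂ) = kron (kron A B : Matrix (Fin 4) (Fin 4) ℂ) C := by
  ext i j
  fin_cases i <;> fin_cases j <;> exact (mul_assoc _ _ _).symm

theorem contract_add (M N : Matrix (Fin 8) (Fin 8) ℂ) (v : Fin 2 → ℂ) :
    contractCtrl (M + N) v = contractCtrl M v + contractCtrl N v := by
  ext a b
  simp only [contractCtrl, Matrix.of_apply, Matrix.add_apply, Fin.sum_univ_two]
  ring

theorem contract_kron (M : Matrix (Fin 4) (Fin 4) ℂ) (N : Matrix (Fin 2) (Fin 2) ℂ)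
    (v : Fin 2 → ℂ) :
    contractCtrl (kron M N) v = (∑ i : Fin 2, ∑ j : Fin 2, star (v i) * N i j * v j) • M := by
  ext a b
  have h : ∀ i j, (kron M N : Matrix (Fin 8) (Fin 8) ℂ) (finProdFinEquiv (a, i))
      (finProdFinEquiv (b, j)) = M a b * N i j := by
    intro i j
    change (Matrix.reindex finProdFinEquiv finProdFinEquiv (M ⊗ₖ N)) (finProdFinEquiv (a, i))
      (finProdFinEquiv (b, j)) = M a b * N i j
    simp only [Matrix.reindex_apply, Matrix.submatrix_apply, Equiv.symm_apply_apply,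
      Matrix.kroneckerMap_apply]
  simp only [contractCtrl, Matrix.of_apply, h, Fin.sum_univ_two, Matrix.smul_apply, smul_eq_mul]
  ring

theorem sqrt_two_inv_sq : ((Real.sqrt 2 : ℂ))⁻¹ * ((Real.sqrt 2 : ℂ))⁻¹ = 1 / 2 := by
  rw [← mul_inv, ← Complex.ofReal_mul, Real.mul_self_sqrt (by norm_num)]
  norm_num

theorem ctrl_coeff (a b : Fin 2) :
    (∑ i : Fin 2, ∑ j : Fin 2, star (ketPlus i) *
      (proj (Pi.single a 1) * proj ketPlus * (proj (Pi.single b 1))ᴴ) i j * ketPlus j) = 1 / 4 := by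
  have h := sqrt_two_inv_sq
  have h0 : ∀ i, ketPlus i = ((Real.sqrt 2 : ℂ))⁻¹ := by
    intro i; fin_cases i <;> simp [ketPlus, ket0, ket1]
  have h1 : star ((Real.sqrt 2 : ℂ))⁻¹ = ((Real.sqrt 2 : ℂ))⁻¹ := by simp
  fin_cases a <;> fin_cases b <;>
    simp [proj, Matrix.mul_apply, Fin.sum_univ_two, Matrix.vecMulVec_apply, h0] <;>
    linear_combination (((Real.sqrt 2 : ℂ))⁻¹ * ((Real.sqrt 2 : ℂ))⁻¹ + 1 / 2) * h

theorem contract_branch (A B : Matrix (Fin 2) (Fin 2) ℂ) (ρ : Matrix (Fin 4) (Fin 4) ℂ) :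
    contractCtrl ((kron I2 (kron A (proj ket0) + kron B (proj ket1)) : Matrix (Fin 8) (Fin 8) ℂ)
      * kron ρ (proj ketPlus) *
      (kron I2 (kron A (proj ket0) + kron B (proj ket1)) : Matrix (Fin 8) (Fin 8) ℂ)ᴴ) ketPlus =
    (1 / 4 : ℂ) • ((kron I2 (A + B) : Matrix (Fin 4) (Fin 4) ℂ) * ρ *
      (kron I2 (A + B) : Matrix (Fin 4) (Fin 4) ℂ)ᴴ) := by
  have e0 : ket0 = Pi.single 0 1 := by ext i; fin_cases i <;> simp [ket0]
  have e1 : ket1 = Pi.single 1 1 := by ext i; fin_cases i <;> simp [ket1]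
  have hW : (kron I2 (kron A (proj ket0) + kron B (proj ket1)) : Matrix (Fin 8) (Fin 8) ℂ) =
      kron (kron I2 A : Matrix (Fin 4) (Fin 4) ℂ) (proj ket0)
        + kron (kron I2 B : Matrix (Fin 4) (Fin 4) ℂ) (proj ket1) := by
    rw [← kron_assoc_two, ← kron_assoc_two]
    exact kron_add_right _ _ _
  have hK : (kron I2 (A + B) : Matrix (Fin 4) (Fin 4) ℂ) = kron I2 A + kron I2 B :=
    kron_add_right _ _ _
  rw [hW, hK]
  generalize (kron I2 A : Matrix (Fin 4) (Fin 4) ℂ) = U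
  generalize (kron I2 B : Matrix (Fin 4) (Fin 4) ℂ) = V
  have key : ∀ (U V : Matrix (Fin 4) (Fin 4) ℂ) (a b : Fin 2),
      contractCtrl ((kron U (proj (Pi.single a 1)) : Matrix (Fin 8) (Fin 8) ℂ)
        * kron ρ (proj ketPlus) * (kron V (proj (Pi.single b 1)) : Matrix (Fin 8) (Fin 8) ℂ)ᴴ)
        ketPlus = (1 / 4 : ℂ) • (U * ρ * Vᴴ) := by
    intro U V a b
    have : ((kron U (proj (Pi.single a 1)) : Matrix (Fin 8) (Fin 8) ℂ)
        * kron ρ (proj ketPlus) * (kron V (proj (Pi.single b 1)) : Matrix (Fin 8) (Fin 8) ℂ)ᴴ)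
        = kron (U * ρ * Vᴴ) (proj (Pi.single a 1) * proj ketPlus * (proj (Pi.single b 1))ᴴ) := by
      rw [← kron_mul, ← kron_mul, ← kron_conjTranspose]
    rw [this, contract_kron, ctrl_coeff]
  rw [e0, e1, Matrix.conjTranspose_add, Matrix.conjTranspose_add]
  simp only [Matrix.add_mul, Matrix.mul_add, smul_add]
  refine (contract_add _ _ _).trans (congrArg₂ _ ?_ ?_)
  · exact (contract_add _ _ _).trans (congrArg₂ _ (key _ _ _ _) (key _ _ _ _))
  · exact (contract_add _ _ _).trans (congrArg₂ _ (key _ _ _ _) (key _ _ _ _))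

theorem main_eq (p q : ℝ) (hp : p ∈ Set.Icc (0 : ℝ) 1)
    (hq : q ∈ Set.Icc (0 : ℝ) 1) (ρ : Matrix (Fin 4) (Fin 4) ℂ) :
    contractCtrl (Sout p q ρ) ketPlus =
      ((1 - p) * (1 - q) : ℝ) • ρ
        + (p * (1 - q) : ℝ) • (kron I2 PX * ρ * (kron I2 PX)ᴴ)
        + ((1 - p) * q : ℝ) • (kron I2 PZ * ρ * (kron I2 PZ)ᴴ) := by
  have hs : ∀ x : ℝ, 0 ≤ x → (Real.sqrt x : ℂ) * (Real.sqrt x : ℂ) = (x : ℂ) := by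
    intro x hx
    rw [← Complex.ofReal_mul, Real.mul_self_sqrt hx]
  have h1 := hs p hp.1
  have h2 := hs (1 - p) (by linarith [hp.2])
  have h3 := hs q hq.1
  have h4 := hs (1 - q) (by linarith [hq.2])
  have hI : (kron I2 I2 : Matrix (Fin 4) (Fin 4) ℂ) = 1 := by
    simp only [kron, I2, Matrix.one_kronecker_one]
    simp
  have k : ∀ (a b : ℝ) (M : Matrix (Fin 2) (Fin 2) ℂ),
      (1 / 4 : ℂ) • ((kron I2 (((2 : ℂ) * (Real.sqrt a * Real.sqrt b)) • M) :
        Matrix (Fin 4) (Fin 4) ℂ) * ρ * (kron I2 (((2 : ℂ) * (Real.sqrt a * Real.sqrt b)) • M) :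
        Matrix (Fin 4) (Fin 4) ℂ)ᴴ) =
      (((Real.sqrt a : ℂ) * Real.sqrt a) * ((Real.sqrt b : ℂ) * Real.sqrt b)) •
        ((kron I2 M : Matrix (Fin 4) (Fin 4) ℂ) * ρ * (kron I2 M : Matrix (Fin 4) (Fin 4) ℂ)ᴴ) := by
    intro a b M
    have e : (kron I2 (((2 : ℂ) * (Real.sqrt a * Real.sqrt b)) • M) : Matrix (Fin 4) (Fin 4) ℂ)
      = ((2 : ℂ) * (Real.sqrt a * Real.sqrt b)) • kron I2 M := kron_smul_right _ _ _
    have st : star ((2 : ℂ) * (Real.sqrt a * Real.sqrt b)) = 2 * (Real.sqrt a * Real.sqrt b) := by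
      simp
    rw [e, Matrix.conjTranspose_smul, st, Matrix.smul_mul, Matrix.smul_mul, Matrix.mul_smul,
      smul_smul, smul_smul]
    congr 1
    ring
  have s00 : Dk p 0 * Ek q 0 + Ek q 0 * Dk p 0 =
      ((2 : ℂ) * (Real.sqrt (1 - p) * Real.sqrt (1 - q))) • I2 := by
    ext i j; fin_cases i <;> fin_cases j <;> simp [Dk, Ek, I2] <;> ring
  have s10 : Dk p 1 * Ek q 0 + Ek q 0 * Dk p 1 =
      ((2 : ℂ) * (Real.sqrt p * Real.sqrt (1 - q))) • PX := by
    ext i j; fin_cases i <;> fin_cases j <;> simp [Dk, Ek, I2, PX] <;> ring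
  have s01 : Dk p 0 * Ek q 1 + Ek q 1 * Dk p 0 =
      ((2 : ℂ) * (Real.sqrt (1 - p) * Real.sqrt q)) • PZ := by
    ext i j; fin_cases i <;> fin_cases j <;> simp [Dk, Ek, I2, PZ] <;> ring
  have s11 : Dk p 1 * Ek q 1 + Ek q 1 * Dk p 1 = (0 : ℂ) • I2 := by
    ext i j; fin_cases i <;> fin_cases j <;> simp [Dk, Ek, PX, PZ] <;> ring
  have z : (kron I2 ((0 : ℂ) • I2) : Matrix (Fin 4) (Fin 4) ℂ) = 0 := by
    have : (kron I2 ((0 : ℂ) • I2) : Matrix (Fin 4) (Fin 4) ℂ) = (0 : ℂ) • kron I2 I2 :=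
      kron_smul_right _ _ _
    rw [this, zero_smul]
  have r : ∀ (x : ℝ) (M : Matrix (Fin 4) (Fin 4) ℂ), x • M = (x : ℂ) • M := by
    intro x M
    ext i j
    simp
  have hb : ∀ i j, contractCtrl (W p q i j * kron ρ (proj ketPlus) * (W p q i j)ᴴ) ketPlus =
      (1 / 4 : ℂ) • ((kron I2 (Dk p i * Ek q j + Ek q j * Dk p i) : Matrix (Fin 4) (Fin 4) ℂ) * ρ *
        (kron I2 (Dk p i * Ek q j + Ek q j * Dk p i) : Matrix (Fin 4) (Fin 4) ℂ)ᴴ) :=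
    fun i j => contract_branch _ _ _
  simp only [Sout, Fin.sum_univ_two, contract_add]
  rw [hb, hb, hb, hb, s00, s10, s01, s11, k, k, k, z, hI, h1, h2, h3, h4, r, r, r]
  simp only [Matrix.one_mul, Matrix.mul_one, Matrix.conjTranspose_one, Matrix.zero_mul, smul_zero,
    add_zero, Complex.ofReal_mul]
  abel

theorem kron_unitary_trace (P : Matrix (Fin 2) (Fin 2) ℂ) (hP : Pᴴ * P = 1)
    (ρ : Matrix (Fin 4) (Fin 4) ℂ) :
    ((kron I2 P : Matrix (Fin 4) (Fin 4) ℂ) * ρ *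
      (kron I2 P : Matrix (Fin 4) (Fin 4) ℂ)ᴴ).trace = ρ.trace := by
  have h : (kron I2 P : Matrix (Fin 4) (Fin 4) ℂ)ᴴ * (kron I2 P : Matrix (Fin 4) (Fin 4) ℂ) = 1 := by
    have e : (kron I2 P)ᴴ * kron I2 P = 1 := by
      rw [kron_conjTranspose, kron_mul, hP]
      simp [kron, I2]
    exact e
  rw [Matrix.trace_mul_comm, ← Matrix.mul_assoc, h, Matrix.one_mul]

theorem plus_heralded_branch (p q : ℝ) (hp : p ∈ Set.Icc (0 : ℝ) 1)
    (hq : q ∈ Set.Icc (0 : ℝ) 1) (ρ : Matrix (Fin 4) (Fin 4) ℂ)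
    (hρ : ρ.trace = 1) :
    contractCtrl (Sout p q ρ) ketPlus =
      ((1 - p) * (1 - q) : ℝ) • ρ
        + (p * (1 - q) : ℝ) • (kron I2 PX * ρ * (kron I2 PX)ᴴ)
        + ((1 - p) * q : ℝ) • (kron I2 PZ * ρ * (kron I2 PZ)ᴴ)
    ∧ (contractCtrl (Sout p q ρ) ketPlus).trace = (1 - p * q : ℝ)
    ∧ (p * q < 1 →
        ((1 - p * q : ℝ)⁻¹ : ℂ) • contractCtrl (Sout p q ρ) ketPlus =
          ((1 - p * q : ℝ)⁻¹ : ℂ) •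
            (((1 - p) * (1 - q) : ℝ) • ρ
              + (p * (1 - q) : ℝ) • (kron I2 PX * ρ * (kron I2 PX)ᴴ)
              + ((1 - p) * q : ℝ) • (kron I2 PZ * ρ * (kron I2 PZ)ᴴ))) := by
  have h := main_eq p q hp hq ρ
  refine ⟨h, ?_, fun _ => by rw [h]⟩
  have hX : PXᴴ * PX = 1 := by
    ext i j; fin_cases i <;> fin_cases j <;> simp [PX, Matrix.mul_apply, Fin.sum_univ_two]
  have hZ : PZᴴ * PZ = 1 := by
    ext i j; fin_cases i <;> fin_cases j <;> simp [PZ, Matrix.mul_apply, Fin.sum_univ_two]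
  have tX := kron_unitary_trace PX hX ρ
  have tZ := kron_unitary_trace PZ hZ ρ
  rw [h, Matrix.trace_add, Matrix.trace_add, Matrix.trace_smul, Matrix.trace_smul,
    Matrix.trace_smul, tX, tZ, hρ]
  simp only [Complex.real_smul]
  push_cast
  ring


end
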